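/- Equivalence of architectures: let d ≥ 1 and N ≥ 1, let A_1, …, A_N ∈ ℝ^((d+1)×(d+1)) be invertible matrices, b_1, …, b_N ∈ ℝ^(d+1), and let L̃ : ℝ^(d+1) → ℝ be affine. Define the conical-projection layers π_k(x) = A_k⁻¹(ReLU(A_k x + b_k) − b_k). Then there exist matrices A'_1, …, A'_N ∈ ℝ^((d+1)×(d+1)), vectors b'_1, …, b'_N ∈ ℝ^(d+1), and an affine map L : ℝ^(d+1) → ℝ such that, with T_k(x) = ReLU(A'_k x + b'_k), one has L ∘ T_N ∘ ⋯ ∘ T_1(x) = L̃ ∘ π_N ∘ ⋯ ∘ π_1(x) for all x ∈ ℝ^(d+1). -/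

import Mathlib

/-! A conical-projection layer is a ReLU layer followed by the affine map `t ↦ A⁻¹ (t - b)`.
That affine map can be absorbed into the affine part of the next ReLU layer, and the one left over
after the last layer into the output map `L`. Hence the state of the conical network after `k` layers
is an affine image `readMat A k * t + readVec A b k` of the state `t` of the ReLU network
(`iterComp_conicalLayer`). -/

/-- Componentwise ReLU of a vector. -/
noncomputable def reluVec {n : ℕ} (v : Fin n → ℝ) : Fin n → ℝ := fun i => max (v i) 0

/-- The standard fully-connected ReLU layer `x ↦ ReLU (A x + b)`. -/
noncomputable def reluLayer {n : ℕ} (A : Matrix (Fin n) (Fin n) ℝ) (b : Fin n → ℝ) :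
    (Fin n → ℝ) → (Fin n → ℝ) :=
  fun x => reluVec (A.mulVec x + b)

/-- The conical-projection layer `x ↦ A⁻¹ (ReLU (A x + b) − b)` associated with an invertible
matrix `A` and a bias `b`. -/
noncomputable def conicalLayer {n : ℕ} (A : Matrix (Fin n) (Fin n) ℝ) (b : Fin n → ℝ) :
    (Fin n → ℝ) → (Fin n → ℝ) :=
  fun x => A⁻¹.mulVec (reluVec (A.mulVec x + b) - b)

/-- `iterComp f N = f (N-1) ∘ ⋯ ∘ f 1 ∘ f 0`. -/
def iterComp {α : Type*} (f : ℕ → α → α) : ℕ → α → α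
  | 0 => id
  | (k+1) => fun x => f k (iterComp f k x)

/-- Linear part of the affine map recovering the state of the conical network after `k` layers from
that of the ReLU network: the identity before the first layer, then the inverse of the matrix of the
layer just applied. -/
noncomputable def readMat {n : ℕ} (A : ℕ → Matrix (Fin n) (Fin n) ℝ) :
    ℕ → Matrix (Fin n) (Fin n) ℝ
  | 0 => 1
  | (k+1) => (A k)⁻¹

/-- Constant part of the affine map whose linear part is `readMat A k`. -/
noncomputable def readVec {n : ℕ} (A : ℕ → Matrix (Fin n) (Fin n) ℝ) (b : ℕ → Fin n → ℝ) :
    ℕ → Fin n → ℝ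
  | 0 => 0
  | (k+1) => -((A k)⁻¹.mulVec (b k))

/-- The two networks stay related by `readMat` and `readVec` when layer `k` of the ReLU network has
as its affine part `y ↦ A k * y + b k` composed with the affine map left over from layer `k - 1`. -/
lemma iterComp_conicalLayer {n : ℕ} (A : ℕ → Matrix (Fin n) (Fin n) ℝ) (b : ℕ → Fin n → ℝ)
    (k : ℕ) (x : Fin n → ℝ) :
    iterComp (fun k => conicalLayer (A k) (b k)) k x =
      (readMat A k).mulVec
        (iterComp (fun k => reluLayer (A k * readMat A k) ((A k).mulVec (readVec A b k) + b k)) k x)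
        + readVec A b k := by
  induction k with
  | zero => simp [iterComp, readMat, readVec]
  | succ k ih =>
    simp only [iterComp, ih]
    simp only [conicalLayer, reluLayer, Matrix.mulVec_add, Matrix.mulVec_mulVec, add_assoc]
    rw [Matrix.mulVec_sub, sub_eq_add_neg, readMat, readVec]

/-- **Equivalence of architectures.** Every network built from conical-projection
layers `π_k(x) = A_k⁻¹(ReLU(A_k x + b_k) − b_k)` with invertible matrices `A_k`, followed by an
affine map `L̃`, is computed by a standard fully-connected ReLU network with the same number of
layers. -/
theorem equivalence_of_architectures
    (d N : ℕ) (hd : 1 ≤ d) (hN : 1 ≤ N)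
    (A : ℕ → Matrix (Fin (d+1)) (Fin (d+1)) ℝ) (b : ℕ → Fin (d+1) → ℝ)
    (hA : ∀ k < N, IsUnit (A k).det)
    (Lt : (Fin (d+1) → ℝ) →ᵃ[ℝ] ℝ) :
    ∃ (A' : ℕ → Matrix (Fin (d+1)) (Fin (d+1)) ℝ) (b' : ℕ → Fin (d+1) → ℝ)
      (L : (Fin (d+1) → ℝ) →ᵃ[ℝ] ℝ),
      ∀ x : Fin (d+1) → ℝ,
        L (iterComp (fun k => reluLayer (A' k) (b' k)) N x)
          = Lt (iterComp (fun k => conicalLayer (A k) (b k)) N x) := by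
  refine ⟨fun k => A k * readMat A k, fun k => (A k).mulVec (readVec A b k) + b k,
    Lt.comp ((readMat A N).mulVecLin.toAffineMap + AffineMap.const ℝ _ (readVec A b N)),
    fun x => ?_⟩
  rw [iterComp_conicalLayer]
  simp
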